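/- arXiv:1710.02551 — 2 statements merged into one kernel-verified Lean document; each statement's English description precedes it below -/
import Mathlib

section
/- Let A and M be real n×n matrices, let V̄, d ∈ ℝ^n, and define sequences (Q_t)_{t≥0}, (V_t)_{t≥0} in ℝ^n by the linearized closed-loop droop dynamics: V_0 = V̄ + d, Q_1 − Q_0 = −M·d, and for all t ≥ 1, V_t − V_{t−1} = A·(Q_t − Q_{t−1}) and Q_{t+1} − Q_t = −M·(V_t − V_{t−1}). Then for every t ≥ 0, V_t = V̄ + (Σ_{i=0}^{t} (−A·M)^i)·d. -/
/-- Linearized closed-loop droop dynamics after a voltage disturbance `d`: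
`V 0 = V̄ + d`, `Q 1 - Q 0 = -M·d`, and for `t ≥ 1`,
`V t - V (t-1) = A·(Q t - Q (t-1))` and `Q (t+1) - Q t = -M·(V t - V (t-1))`.
Then `V t = V̄ + (∑_{i=0}^{t} (-A·M)^i)·d` for every `t ≥ 0`. -/
theorem droop_disturbance_voltage_formula {n : ℕ}
    (A M : Matrix (Fin n) (Fin n) ℝ) (Vbar d : Fin n → ℝ)
    (Q V : ℕ → Fin n → ℝ)
    (hV0 : V 0 = Vbar + d)
    (hQ1 : Q 1 - Q 0 = -(M.mulVec d))
    (hV : ∀ t : ℕ, V (t + 1) - V t = A.mulVec (Q (t + 1) - Q t))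
    (hQ : ∀ t : ℕ, Q (t + 2) - Q (t + 1) = -(M.mulVec (V (t + 1) - V t))) :
    ∀ t : ℕ, V t = Vbar + (∑ i ∈ Finset.range (t + 1), (-(A * M)) ^ i).mulVec d := by
  have key : ∀ t : ℕ, V (t + 1) - V t = ((-(A * M)) ^ (t + 1)).mulVec d := by
    intro t
    induction t with
    | zero =>
      rw [hV 0, zero_add, hQ1, pow_one, Matrix.mulVec_neg, Matrix.mulVec_mulVec, Matrix.neg_mulVec]
    | succ k ih =>
      rw [hV (k + 1), hQ k, ih, Matrix.mulVec_neg, Matrix.mulVec_mulVec, Matrix.mulVec_mulVec,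
        pow_succ' _ (k + 1), ← Matrix.neg_mulVec, neg_mul]
  intro t
  induction t with
  | zero => simp [hV0]
  | succ k ih =>
    rw [Finset.sum_range_succ, Matrix.add_mulVec, ← key k, ← add_assoc, ← ih]
    abel
end

section
/- Let A, M, K be real n×n matrices with I + A·M invertible, and let S_t, S_{t+1}, Q̄_t, Q̄_{t+1}, q ∈ ℝ^n satisfy: (i) Q̄_t = q − M·S_t, (ii) Q̄_{t+1} = (q − K·S_t) − M·S_{t+1}, and (iii) S_{t+1} − S_t = A·(Q̄_{t+1} − Q̄_t). Then S_{t+1} = B·S_t where B = I − (I + A·M)^{-1}·A·K. -/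
/-- Outer-loop error dynamics of the two-layer adaptive volt/var control: if
`Q̄_t = q - M·S_t`, `Q̄_{t+1} = (q - K·S_t) - M·S_{t+1}` and
`S_{t+1} - S_t = A·(Q̄_{t+1} - Q̄_t)`, then `S_{t+1} = B·S_t` with
`B = I - (I + A·M)⁻¹·A·K`. -/
theorem outer_loop_error_dynamics {n : ℕ}
    (A M K : Matrix (Fin n) (Fin n) ℝ)
    (hUnit : IsUnit (1 + A * M))
    (St St1 Qt Qt1 q : Fin n → ℝ)
    (h1 : Qt = q - M.mulVec St)
    (h2 : Qt1 = (q - K.mulVec St) - M.mulVec St1)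
    (h3 : St1 - St = A.mulVec (Qt1 - Qt)) :
    St1 = (1 - (1 + A * M)⁻¹ * A * K).mulVec St := by
  have hdet : IsUnit (1 + A * M).det := (Matrix.isUnit_iff_isUnit_det _).mp hUnit
  have key : (1 + A * M).mulVec (St1 - St) = -(A * K).mulVec St := by
    rw [Matrix.add_mulVec, Matrix.one_mulVec, Matrix.mulVec_sub]
    rw [h3, h1, h2]
    simp only [Matrix.mulVec_sub, Matrix.mulVec_mulVec]
    abel
  have h4 : St1 - St = -((1 + A * M)⁻¹ * A * K).mulVec St := by
    have h5 := congrArg (fun v => (1 + A * M)⁻¹.mulVec v) key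
    simp only [Matrix.mulVec_mulVec, Matrix.nonsing_inv_mul _ hdet, Matrix.one_mulVec] at h5
    rw [h5, Matrix.mulVec_neg, Matrix.mulVec_mulVec,
      Matrix.mul_assoc]
  rw [Matrix.sub_mulVec, Matrix.one_mulVec]
  rw [sub_eq_add_neg, ← h4]
  abel
end
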